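/- Let Y be a finite-dimensional real vector space and g an asymmetric norm on Y, with Y carrying the real normed space structure of the associated norm ‖y‖ = max (g y) (g (-y)). Then c(Y) = 0 (i.e., for every ε > 0 there exists y with g y = 1 and g (-y) < ε) if and only if there exists e ∈ Y with g e = 1 and g (-e) = 0 (i.e., Y is not a T1 space). -/

import Mathlib

/-- `g` is an asymmetric norm on the real vector space `Y`. -/
def IsAsymmNorm {Y : Type*} [AddCommGroup Y] [Module ℝ Y] (g : Y → ℝ) : Prop :=
  (∀ y, 0 ≤ g y) ∧ (∀ (c : ℝ), 0 ≤ c → ∀ y, g (c • y) = c * g y) ∧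
  (∀ y z, g (y + z) ≤ g y + g z) ∧ (∀ y, g y = 0 → g (-y) = 0 → y = 0)

/-!
Since `g x - g y ≤ g (x - y) ≤ ‖x - y‖`, the function `g` is continuous. In a proper space the set
`{y | g y = 1 ∧ g (-y) ≤ 1}`, which is closed and lies in the unit ball, is therefore compact, so
`y ↦ g (-y)` attains its infimum over it. Points with `g y = 1` and `g (-y) < ε` belong to this set
once `ε ≤ 1`, so this infimum is zero when the index is.
-/

open Metric

theorem exists_mem_le_of_isCompact_of_forall_exists_lt {X α : Type*} [TopologicalSpace X]
    [LinearOrder α] [NoMaxOrder α] {K : Set X} {f : X → α} {c : α} (hK : IsCompact K)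
    (hf : LowerSemicontinuousOn f K) (h : ∀ b > c, ∃ x ∈ K, f x < b) :
    ∃ x ∈ K, f x ≤ c := by
  have hne : K.Nonempty := by
    obtain ⟨b, hb⟩ := exists_gt c
    obtain ⟨x, hx, -⟩ := h b hb
    exact ⟨x, hx⟩
  obtain ⟨e, he, hmin⟩ := hf.exists_isMinOn hne hK
  refine ⟨e, he, le_of_not_gt fun hlt => ?_⟩
  obtain ⟨x, hx, hxe⟩ := h (f e) hlt
  exact (hmin hx).not_gt hxe

section SeminormedAddCommGroup

variable {Y : Type*} [SeminormedAddCommGroup Y] {g : Y → ℝ}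

theorem lipschitzWith_of_add_le_of_le_mul_norm {C : NNReal}
    (hadd : ∀ y z, g (y + z) ≤ g y + g z) (hle : ∀ y, g y ≤ C * ‖y‖) : LipschitzWith C g :=
  LipschitzWith.of_le_add_mul C fun x y =>
    calc
      g x = g (y + (x - y)) := by rw [add_sub_cancel]
      _ ≤ g y + g (x - y) := hadd y (x - y)
      _ ≤ g y + C * dist x y := by
        rw [dist_eq_norm]
        gcongr
        exact hle (x - y)

theorem isCompact_setOf_eq_and_neg_le [ProperSpace Y] (hg : Continuous g)
    (hnorm : ∀ y, ‖y‖ ≤ max (g y) (g (-y))) (a b : ℝ) :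
    IsCompact {y | g y = a ∧ g (-y) ≤ b} := by
  have hclosed : IsClosed {y | g y = a ∧ g (-y) ≤ b} :=
    (isClosed_eq hg continuous_const).inter (isClosed_le (hg.comp continuous_neg) continuous_const)
  refine (isCompact_closedBall (0 : Y) (max a b)).of_isClosed_subset hclosed ?_
  rintro y ⟨hya, hyb⟩
  rw [mem_closedBall_zero_iff]
  exact (hnorm y).trans (max_le_max hya.le hyb)

theorem index_zero_iff_not_T1_of_finiteDimensional_general [ProperSpace Y]
    (hnonneg : ∀ y, 0 ≤ g y) (hadd : ∀ y z, g (y + z) ≤ g y + g z)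
    (hnorm : ∀ y, ‖y‖ = max (g y) (g (-y))) :
    (∀ ε > (0 : ℝ), ∃ y : Y, g y = 1 ∧ g (-y) < ε) ↔ ∃ e : Y, g e = 1 ∧ g (-e) = 0 := by
  constructor
  · intro h
    have hcont : Continuous g :=
      (lipschitzWith_of_add_le_of_le_mul_norm (C := 1) hadd fun y => by simp [hnorm y]).continuous
    have hcompact : IsCompact {y | g y = 1 ∧ g (-y) ≤ 1} :=
      isCompact_setOf_eq_and_neg_le hcont (fun y => (hnorm y).le) 1 1
    have hsmall : ∀ ε > 0, ∃ y ∈ {y | g y = 1 ∧ g (-y) ≤ 1}, g (-y) < ε := by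
      intro ε hε
      obtain ⟨y, hy, hlt⟩ := h (min ε 1) (lt_min hε one_pos)
      obtain ⟨hyε, hy1⟩ := lt_min_iff.mp hlt
      exact ⟨y, ⟨hy, hy1.le⟩, hyε⟩
    obtain ⟨e, ⟨he, -⟩, hle⟩ := exists_mem_le_of_isCompact_of_forall_exists_lt hcompact
      (hcont.comp continuous_neg).continuousOn.lowerSemicontinuousOn hsmall
    exact ⟨e, he, hle.antisymm (hnonneg (-e))⟩
  · rintro ⟨e, he, hneg⟩ ε hε
    exact ⟨e, he, hneg.trans_lt hε⟩

end SeminormedAddCommGroup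

/-- In a finite-dimensional asymmetric normed space, `c(Y) = 0` iff `Y` is not T1,
i.e. iff there exists `e` with `g e = 1` and `g (-e) = 0`. -/
theorem index_zero_iff_not_T1_of_finiteDimensional
    {Y : Type*} [NormedAddCommGroup Y] [NormedSpace ℝ Y] [FiniteDimensional ℝ Y]
    (g : Y → ℝ) (hg : IsAsymmNorm g)
    (hYnorm : ∀ y : Y, ‖y‖ = max (g y) (g (-y))) :
    (∀ ε > (0 : ℝ), ∃ y : Y, g y = 1 ∧ g (-y) < ε) ↔
    (∃ e : Y, g e = 1 ∧ g (-e) = 0) := by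
  exact index_zero_iff_not_T1_of_finiteDimensional_general hg.1 hg.2.2.1 hYnorm
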